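/- arXiv:2603.01681 — 6 statements merged into one kernel-verified Lean document; each statement's English description precedes it below -/
import Mathlib

section
/- Let H : ℝ^d → ℝ be convex and differentiable, let α > 1, and let C > 1 be a constant such that H(p) ≤ C|p|^α + C, ∇H(p)·p ≥ C⁻¹|p|^α − C, and H(p) ≥ −C for all p ∈ ℝ^d. Then there exists a constant C' > 1 such that for all p ∈ ℝ^d one has −H(p) + ∇H(p)·p ≥ C'⁻¹|p|^α − C' and H(p) ≥ −C'. -/
open scoped RealInnerProductSpace

/-!
Convexity along the ray through `p` gives `H p - H (σ p) ≤ (1 - σ) ∇H(p)·p`, that is,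
`σ ∇H(p)·p - H (σ p) ≤ ∇H(p)·p - H p`. On the left, the coercivity of `∇H(p)·p` contributes
`C⁻¹ σ ‖p‖ ^ α` while the growth bound on `H (σ p)` costs only `C σ ^ α ‖p‖ ^ α`, which is smaller
once `σ` is small, because `α > 1`.
-/

open Filter Topology

theorem exists_pos_mul_rpow_lt_mul {α c : ℝ} (hα : 1 < α) (hc : 0 < c) (A : ℝ) :
    ∃ σ : ℝ, 0 < σ ∧ A * σ ^ α < c * σ := by
  have hlim : Tendsto (fun σ : ℝ => A * σ ^ (α - 1)) (𝓝[>] 0) (𝓝 0) := by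
    have hcont : ContinuousAt (fun σ : ℝ => A * σ ^ (α - 1)) 0 :=
      (Real.continuousAt_rpow_const 0 (α - 1) (.inr (sub_nonneg.2 hα.le))).const_mul A
    simpa [Real.zero_rpow (sub_pos.2 hα).ne'] using hcont.tendsto.mono_left nhdsWithin_le_nhds
  obtain ⟨σ, hσc, hσ⟩ := ((hlim.eventually_lt_const hc).and self_mem_nhdsWithin).exists
  refine ⟨σ, hσ, ?_⟩
  calc A * σ ^ α = A * σ ^ (α - 1) * σ := by
        rw [mul_assoc, ← Real.rpow_add_one (ne_of_gt hσ), sub_add_cancel]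
    _ < c * σ := mul_lt_mul_of_pos_right hσc hσ

section Module

variable {E : Type*} [AddCommGroup E] [Module ℝ E] {f : E → ℝ} {f' : ℝ}

theorem add_le_of_convexOn_of_hasLineDerivAt {S : Set E} {x v : E} (hf : ConvexOn ℝ S f)
    (hx : x ∈ S) (hxv : x + v ∈ S) (hf' : HasLineDerivAt ℝ f f' x v) :
    f x + f' ≤ f (x + v) := by
  let line : ℝ →ᵃ[ℝ] E := AffineMap.lineMap x (x + v)
  have hline (t : ℝ) : line t = x + t • v := by simp [line, AffineMap.lineMap_apply, add_comm]
  have hderiv : HasDerivAt (f ∘ line) f' 0 := by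
    simpa only [HasLineDerivAt, Function.comp_def, hline] using hf'
  have hslope : f' ≤ slope (f ∘ line) 0 1 :=
    (hf.comp_affineMap line).le_slope_of_hasDerivAt (by simpa [hline] using hx)
      (by simpa [hline] using hxv) zero_lt_one hderiv
  have hslope_eq : slope (f ∘ line) 0 1 = f (x + v) - f x := by simp [slope_def_field, hline]
  linarith

theorem mul_sub_apply_smul_le_of_convexOn {p : E} (hf : ConvexOn ℝ Set.univ f)
    (hf' : HasLineDerivAt ℝ f f' p p) (σ : ℝ) :
    σ * f' - f (σ • p) ≤ f' - f p := by
  have htangent : f p + (σ - 1) * f' ≤ f (p + (σ - 1) • p) :=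
    add_le_of_convexOn_of_hasLineDerivAt hf trivial trivial (hf'.smul (σ - 1))
  have hendpoint : p + (σ - 1) • p = σ • p := by module
  rw [hendpoint] at htangent
  linarith

end Module

section NormedSpace

variable {E : Type*} [SeminormedAddCommGroup E] [NormedSpace ℝ E] {H R : E → ℝ} {α : ℝ}

theorem exists_mul_norm_rpow_sub_le_of_convexOn {A B c D : ℝ} (hconv : ConvexOn ℝ Set.univ H)
    (hderiv : ∀ p, HasLineDerivAt ℝ H (R p) p p) (hα : 1 < α) (hc : 0 < c)
    (hupper : ∀ p, H p ≤ A * ‖p‖ ^ α + B) (hcoercive : ∀ p, c * ‖p‖ ^ α - D ≤ R p) :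
    ∃ c' D' : ℝ, 0 < c' ∧ ∀ p, c' * ‖p‖ ^ α - D' ≤ R p - H p := by
  obtain ⟨σ, hσ, hσA⟩ := exists_pos_mul_rpow_lt_mul hα hc A
  refine ⟨c * σ - A * σ ^ α, σ * D + B, sub_pos.2 hσA, fun p => ?_⟩
  have hnorm : ‖σ • p‖ ^ α = σ ^ α * ‖p‖ ^ α := by
    rw [norm_smul, Real.norm_of_nonneg hσ.le, Real.mul_rpow hσ.le (norm_nonneg p)]
  calc (c * σ - A * σ ^ α) * ‖p‖ ^ α - (σ * D + B)
      = σ * (c * ‖p‖ ^ α - D) - (A * ‖σ • p‖ ^ α + B) := by rw [hnorm]; ring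
    _ ≤ σ * R p - H (σ • p) :=
        sub_le_sub (mul_le_mul_of_nonneg_left (hcoercive p) hσ.le) (hupper (σ • p))
    _ ≤ R p - H p := mul_sub_apply_smul_le_of_convexOn hconv (hderiv p) σ

theorem stmt_1_general {C : ℝ} (hconv : ConvexOn ℝ Set.univ H)
    (hderiv : ∀ p, HasLineDerivAt ℝ H (R p) p p) (hα : 1 < α) (hC : 0 < C)
    (hupper : ∀ p, H p ≤ C * ‖p‖ ^ α + C) (hcoercive : ∀ p, C⁻¹ * ‖p‖ ^ α - C ≤ R p)
    (hlower : ∀ p, -C ≤ H p) :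
    ∃ C' : ℝ, 1 < C' ∧ ∀ p, C'⁻¹ * ‖p‖ ^ α - C' ≤ -H p + R p ∧ -C' ≤ H p := by
  obtain ⟨c, D, hc, hbound⟩ :=
    exists_mul_norm_rpow_sub_le_of_convexOn hconv hderiv hα (inv_pos.2 hC) hupper hcoercive
  obtain ⟨C', hone, hcC', hDC', hCC'⟩ : ∃ C' : ℝ, 1 < C' ∧ c⁻¹ ≤ C' ∧ D ≤ C' ∧ C ≤ C' :=
    ((eventually_gt_atTop 1).and <| (eventually_ge_atTop c⁻¹).and <|
      (eventually_ge_atTop D).and <| eventually_ge_atTop C).exists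
  refine ⟨C', hone, fun p => ⟨?_, (neg_le_neg hCC').trans (hlower p)⟩⟩
  calc C'⁻¹ * ‖p‖ ^ α - C' ≤ c * ‖p‖ ^ α - D := by
        gcongr
        exact inv_le_of_inv_le₀ hc hcC'
    _ ≤ R p - H p := hbound p
    _ = -H p + R p := sub_eq_neg_add _ _

end NormedSpace

/-- Proposition 2.2, implication (b ⇒ c): for a convex differentiable Hamiltonian
`H : ℝ^d → ℝ` with `H p ≤ C ‖p‖^α + C`, `∇H(p)·p ≥ C⁻¹ ‖p‖^α - C` and
`H p ≥ -C`, there is `C' > 1` with `-H p + ∇H(p)·p ≥ C'⁻¹ ‖p‖^α - C'` and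
`H p ≥ -C'` for all `p`. -/
theorem stmt_1 {d : ℕ} (H : EuclideanSpace ℝ (Fin d) → ℝ)
    (H' : EuclideanSpace ℝ (Fin d) → EuclideanSpace ℝ (Fin d))
    (hconv : ConvexOn ℝ Set.univ H)
    (hdiff : ∀ p, HasGradientAt H (H' p) p)
    (α C : ℝ) (hα : 1 < α) (hC : 1 < C)
    (hub : ∀ p, H p ≤ C * ‖p‖ ^ α + C)
    (hlb : ∀ p, C⁻¹ * ‖p‖ ^ α - C ≤ ⟪H' p, p⟫)
    (hHlb : ∀ p, -C ≤ H p) :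
    ∃ C' : ℝ, 1 < C' ∧
      ∀ p, C'⁻¹ * ‖p‖ ^ α - C' ≤ -H p + ⟪H' p, p⟫ ∧ -C' ≤ H p :=
  stmt_1_general hconv (fun p => (hdiff p).hasFDerivAt.hasLineDerivAt p) hα (one_pos.trans hC)
    hub hlb hHlb
end

section
/- Let H : ℝ^d → ℝ be differentiable, let α > 1, and let C > 1 be a constant such that −H(p) + ∇H(p)·p ≥ C⁻¹|p|^α − C and H(p) ≥ −C for all p ∈ ℝ^d. Then there exists a constant C' > 1 such that H(p) ≥ C'⁻¹|p|^α − C' for all p ∈ ℝ^d. -/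
open scoped RealInnerProductSpace

/-!
Along the ray `t ↦ t • p`, the bound `A ≤ -H q + ∇H(q)·q` says exactly that `(H (t • p) + A) / t`
has nonnegative derivative. Comparing `t = 1/2` with `t = 1` gives `A + 2 H (p/2) ≤ H p`. On this
segment `A = C⁻¹ (‖p‖/2)^α - C` is admissible, and `H (p/2) ≥ -C`, so
`H p ≥ C⁻¹ 2^(-α) ‖p‖^α - 3C`.
-/

open Set

theorem monotoneOn_add_const_div {f f' : ℝ → ℝ} {D : Set ℝ} {A : ℝ} (hD : Convex ℝ D)
    (hpos : D ⊆ Ioi 0) (hf : ContinuousOn f D)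
    (hf' : ∀ t ∈ interior D, HasDerivWithinAt f (f' t) (interior D) t)
    (hA : ∀ t ∈ interior D, A ≤ -f t + t * f' t) :
    MonotoneOn (fun t ↦ (f t + A) / t) D := by
  have ne_zero : ∀ t ∈ D, t ≠ 0 := fun t ht ↦ (hpos ht).ne'
  refine monotoneOn_of_hasDerivWithinAt_nonneg hD
    ((hf.add continuousOn_const).div continuousOn_id ne_zero)
    (fun t ht ↦ ((hf' t ht).add_const A).div (hasDerivWithinAt_id t _)
      (ne_zero t (interior_subset ht)))
    fun t ht ↦ div_nonneg ?_ (sq_nonneg _)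
  linarith [hA t ht]

section NormedSpace

variable {E : Type*} [NormedAddCommGroup E] [NormedSpace ℝ E] {H : E → ℝ} {H' : E → E →L[ℝ] ℝ}

theorem add_const_div_le_of_le_neg_add_fderiv {p : E} {s A : ℝ} (hs : 0 < s) (hs1 : s ≤ 1)
    (hdiff : ∀ t ∈ Icc s 1, HasFDerivAt H (H' (t • p)) (t • p))
    (hA : ∀ t ∈ Icc s 1, A ≤ -H (t • p) + H' (t • p) (t • p)) :
    (H (s • p) + A) / s ≤ H p + A := by
  have hray : ∀ t ∈ Icc s 1, HasDerivAt (fun t : ℝ ↦ H (t • p)) (H' (t • p) p) t := fun t ht ↦ by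
    simpa [Function.comp_def] using
      (hdiff t ht).comp_hasDerivAt t ((hasDerivAt_id t).smul_const p)
  have hmono : MonotoneOn (fun t : ℝ ↦ (H (t • p) + A) / t) (Icc s 1) :=
    monotoneOn_add_const_div (convex_Icc s 1) (fun t ht ↦ hs.trans_le ht.1)
      (fun t ht ↦ (hray t ht).continuousAt.continuousWithinAt)
      (fun t ht ↦ (hray t (interior_subset ht)).hasDerivWithinAt)
      (fun t ht ↦ by simpa using hA t (interior_subset ht))
  simpa using hmono (left_mem_Icc.2 hs1) (right_mem_Icc.2 hs1) hs1

theorem mul_norm_div_rpow_sub_le_of_le_neg_add_fderiv {α c K M : ℝ} (hα : 0 ≤ α) (hc : 0 ≤ c)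
    (hdiff : ∀ p, HasFDerivAt H (H' p) p)
    (hlb : ∀ p, c * ‖p‖ ^ α - K ≤ -H p + H' p p) (hHlb : ∀ p, -M ≤ H p) (p : E) :
    c * (‖p‖ / 2) ^ α - (K + 2 * M) ≤ H p := by
  have hsegment : ∀ t ∈ Icc (1 / 2 : ℝ) 1,
      c * (‖p‖ / 2) ^ α - K ≤ -H (t • p) + H' (t • p) (t • p) := fun t ht ↦ by
    have hnorm : ‖p‖ / 2 ≤ ‖t • p‖ := by
      rw [norm_smul, Real.norm_of_nonneg (by linarith [ht.1])]
      nlinarith [ht.1, norm_nonneg p]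
    calc c * (‖p‖ / 2) ^ α - K ≤ c * ‖t • p‖ ^ α - K := by gcongr
      _ ≤ _ := hlb (t • p)
  have hhalf := add_const_div_le_of_le_neg_add_fderiv one_half_pos one_half_lt_one.le
    (fun t _ ↦ hdiff (t • p)) hsegment
  linarith [hHlb ((1 / 2 : ℝ) • p)]

theorem stmt_2_general (hdiff : ∀ p, HasFDerivAt H (H' p) p) {α C : ℝ} (hα : 0 ≤ α) (hC : 0 < C)
    (hlb : ∀ p, C⁻¹ * ‖p‖ ^ α - C ≤ -H p + H' p p) (hHlb : ∀ p, -C ≤ H p) :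
    ∃ C' : ℝ, 1 < C' ∧ ∀ p, C'⁻¹ * ‖p‖ ^ α - C' ≤ H p := by
  have htwo : (1 : ℝ) ≤ 2 ^ α := Real.one_le_rpow one_le_two hα
  refine ⟨3 * C * 2 ^ α + 1, lt_add_of_pos_left 1 (by positivity), fun p ↦ ?_⟩
  have hcoeff : C * 2 ^ α ≤ 3 * C * 2 ^ α + 1 := by nlinarith
  have hconst : C + 2 * C ≤ 3 * C * 2 ^ α + 1 := by nlinarith
  calc (3 * C * 2 ^ α + 1)⁻¹ * ‖p‖ ^ α - (3 * C * 2 ^ α + 1)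
      ≤ (C * 2 ^ α)⁻¹ * ‖p‖ ^ α - (C + 2 * C) := by gcongr
    _ = C⁻¹ * (‖p‖ / 2) ^ α - (C + 2 * C) := by
      rw [Real.div_rpow (norm_nonneg p) zero_le_two, mul_inv, div_eq_inv_mul, mul_assoc]
    _ ≤ H p := mul_norm_div_rpow_sub_le_of_le_neg_add_fderiv hα (by positivity) hdiff hlb hHlb p

end NormedSpace

/-- Proposition 2.2, implication (c ⇒ a): for a differentiable Hamiltonian
`H : ℝ^d → ℝ` with `-H p + ∇H(p)·p ≥ C⁻¹ ‖p‖^α - C` and `H p ≥ -C`,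
there is `C' > 1` with `H p ≥ C'⁻¹ ‖p‖^α - C'` for all `p`. -/
theorem stmt_2 {d : ℕ} (H : EuclideanSpace ℝ (Fin d) → ℝ)
    (H' : EuclideanSpace ℝ (Fin d) → EuclideanSpace ℝ (Fin d))
    (hdiff : ∀ p, HasGradientAt H (H' p) p)
    (α C : ℝ) (hα : 1 < α) (hC : 1 < C)
    (hlb : ∀ p, C⁻¹ * ‖p‖ ^ α - C ≤ -H p + ⟪H' p, p⟫)
    (hHlb : ∀ p, -C ≤ H p) :
    ∃ C' : ℝ, 1 < C' ∧ ∀ p, C'⁻¹ * ‖p‖ ^ α - C' ≤ H p :=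
  stmt_2_general (fun p ↦ (hdiff p).hasFDerivAt) (by linarith) (by linarith)
    (by simpa using hlb) hHlb
end

section
/- Let α > 1 and β > 0, set γ := α(β+1)/β and γ' := γ/(γ−1), and let H : ℝ^d → ℝ be differentiable with |∇H(p)| ≤ C(|p|^{α−1} + 1) for all p ∈ ℝ^d, for some constant C > 1. For p₀, p₁ ∈ ℝ^d, m₀, m₁ ≥ 0 and θ ∈ [0,1] set p_θ = (1−θ)p₀ + θp₁ and m_θ = (1−θ)m₀ + θm₁. Then there exists a constant C' > 1, independent of p₀, p₁, m₀, m₁, θ, such that m_θ |∇H(p_θ)| ≤ C' ( θ^{min(γ−1,1)} (|p₁|^{γ−1} + m₁^{(β+1)/γ'}) + (1−θ)^{min(γ−1,1)} (|p₀|^{γ−1} + m₀^{(β+1)/γ'}) + 1 ). -/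
/-!
At the point `p = p_θ` with `m = m_θ`, Young's inequality for the conjugate pair
`L = (β + 1) / γ'`, `(γ - 1) / (α - 1)` bounds the flux `m (‖p‖ ^ (α - 1) + 1)` by
`m ^ L + ‖p‖ ^ (γ - 1) + 1`, up to a factor of two. It remains to distribute the powers over the
convex combinations: for `r ≥ 1` convexity of `t ↦ t ^ r` puts the weights `1 - θ`, `θ` in front,
for `r ≤ 1` subadditivity puts `(1 - θ) ^ r`, `θ ^ r` there. Since weights lie in `[0, 1]`,
lowering their exponent to a common value only enlarges the bound.
-/

section ConvexCombination

variable {a b r s : ℝ}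

theorem rpow_convexCombination_le_min {x y : ℝ} (ha : 0 ≤ a) (hb : 0 ≤ b) (hab : a + b = 1)
    (hr : 0 ≤ r) (hx : 0 ≤ x) (hy : 0 ≤ y) :
    (a * x + b * y) ^ r ≤ a ^ min r 1 * x ^ r + b ^ min r 1 * y ^ r := by
  rcases le_total 1 r with one_le_r | r_le_one
  · simpa only [min_eq_right one_le_r, Real.rpow_one, smul_eq_mul] using
      (convexOn_rpow one_le_r).2 (Set.mem_Ici.2 hx) (Set.mem_Ici.2 hy) ha hb hab
  · rw [min_eq_left r_le_one, ← Real.mul_rpow ha hx, ← Real.mul_rpow hb hy]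
    exact Real.rpow_add_le_add_rpow (mul_nonneg ha hx) (mul_nonneg hb hy) hr r_le_one

theorem rpow_convexCombination_le {x y : ℝ} (ha : 0 ≤ a) (hb : 0 ≤ b) (hab : a + b = 1)
    (hs : 0 ≤ s) (hsr : s ≤ min r 1) (hx : 0 ≤ x) (hy : 0 ≤ y) :
    (a * x + b * y) ^ r ≤ a ^ s * x ^ r + b ^ s * y ^ r := by
  have hr : 0 ≤ r := hs.trans (hsr.trans (min_le_left r 1))
  have ha_pow : a ^ min r 1 ≤ a ^ s :=
    Real.rpow_le_rpow_of_exponent_ge' ha (by linarith) hs hsr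
  have hb_pow : b ^ min r 1 ≤ b ^ s :=
    Real.rpow_le_rpow_of_exponent_ge' hb (by linarith) hs hsr
  exact (rpow_convexCombination_le_min ha hb hab hr hx hy).trans (by gcongr)

theorem norm_convexCombination_rpow_le {E : Type*} [SeminormedAddCommGroup E] [NormedSpace ℝ E]
    (ha : 0 ≤ a) (hb : 0 ≤ b) (hab : a + b = 1) (hs : 0 ≤ s) (hsr : s ≤ min r 1) (x y : E) :
    ‖a • x + b • y‖ ^ r ≤ a ^ s * ‖x‖ ^ r + b ^ s * ‖y‖ ^ r := by
  have hr : 0 ≤ r := hs.trans (hsr.trans (min_le_left r 1))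
  have hnorm : ‖a • x + b • y‖ ≤ a * ‖x‖ + b * ‖y‖ :=
    convexOn_univ_norm.2 (Set.mem_univ x) (Set.mem_univ y) ha hb hab
  exact (Real.rpow_le_rpow (norm_nonneg _) hnorm hr).trans
    (rpow_convexCombination_le ha hb hab hs hsr (norm_nonneg x) (norm_nonneg y))

end ConvexCombination

section Young

variable {k L r m t : ℝ}

theorem mul_rpow_le_rpow_add_rpow (hk : k ≠ 0) (hL : L.HolderConjugate (r / k))
    (hm : 0 ≤ m) (ht : 0 ≤ t) : m * t ^ k ≤ m ^ L + t ^ r :=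
  calc m * t ^ k ≤ m ^ L / L + (t ^ k) ^ (r / k) / (r / k) :=
        Real.young_inequality_of_nonneg hm (Real.rpow_nonneg ht k) hL
    _ ≤ m ^ L + (t ^ k) ^ (r / k) :=
        add_le_add (div_le_self (by positivity) hL.lt.le)
          (div_le_self (by positivity) hL.symm.lt.le)
    _ = m ^ L + t ^ r := by rw [← Real.rpow_mul ht, mul_div_cancel₀ r hk]

theorem mul_rpow_add_one_le (hk : k ≠ 0) (hL : L.HolderConjugate (r / k))
    (hm : 0 ≤ m) (ht : 0 ≤ t) : m * (t ^ k + 1) ≤ 2 * (m ^ L + t ^ r + 1) := by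
  have young_t : m * t ^ k ≤ m ^ L + t ^ r := mul_rpow_le_rpow_add_rpow hk hL hm ht
  have young_one : m ≤ m ^ L + 1 := by
    simpa only [Real.one_rpow, mul_one] using mul_rpow_le_rpow_add_rpow hk hL hm zero_le_one
  have ht_pow : 0 ≤ t ^ r := Real.rpow_nonneg ht r
  linarith

end Young

theorem holderConjugate_growth_exponents {α β γ : ℝ} (hα : 1 < α) (hβ : 0 < β)
    (hγ : γ = α * (β + 1) / β) :
    ((β + 1) / (γ / (γ - 1))).HolderConjugate ((γ - 1) / (α - 1)) := by
  have hγα : γ = α + α / β := by rw [hγ]; field_simp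
  have hα_lt_γ : α < γ := by
    rw [hγα]
    exact lt_add_of_pos_right α (by positivity)
  have hα_sub : 0 < α - 1 := sub_pos.2 hα
  have hγ_sub : 0 < γ - 1 := sub_pos.2 (hα.trans hα_lt_γ)
  have hγβ : γ / (β + 1) = α / β := by rw [hγ]; field_simp
  refine (Real.holderConjugate_iff.2 ⟨?_, ?_⟩).symm
  · rw [one_lt_div hα_sub]
    linarith
  · calc ((γ - 1) / (α - 1))⁻¹ + ((β + 1) / (γ / (γ - 1)))⁻¹
        = (α - 1 + γ / (β + 1)) / (γ - 1) := by field_simp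
      _ = (γ - 1) / (γ - 1) := by rw [hγβ, hγα]; ring
      _ = 1 := div_self hγ_sub.ne'

theorem stmt_9_general {E G : Type*} [SeminormedAddCommGroup E] [NormedSpace ℝ E]
    [SeminormedAddCommGroup G] {k L r C : ℝ} (hk : 0 < k) (hL : L.HolderConjugate (r / k))
    {F : E → G} (hF : ∀ p, ‖F p‖ ≤ C * (‖p‖ ^ k + 1))
    (p₀ p₁ : E) {m₀ m₁ a b : ℝ} (hm₀ : 0 ≤ m₀) (hm₁ : 0 ≤ m₁)
    (ha : 0 ≤ a) (hb : 0 ≤ b) (hab : a + b = 1) :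
    (a * m₀ + b * m₁) * ‖F (a • p₀ + b • p₁)‖ ≤
      2 * C * (b ^ min r 1 * (‖p₁‖ ^ r + m₁ ^ L) + a ^ min r 1 * (‖p₀‖ ^ r + m₀ ^ L) + 1) := by
  set m := a * m₀ + b * m₁
  set p := a • p₀ + b • p₁
  set s := min r 1
  have hm : 0 ≤ m := by positivity
  have hr : 0 < r := (div_pos_iff_of_pos_right hk).1 hL.symm.pos
  have hs : 0 ≤ s := le_min hr.le zero_le_one
  have hsL : s ≤ min L 1 := le_min ((min_le_right r 1).trans hL.lt.le) (min_le_right r 1)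
  have hC : 0 ≤ C := nonneg_of_mul_nonneg_left ((norm_nonneg _).trans (hF p)) (by positivity)
  have hm_pow : m ^ L ≤ a ^ s * m₀ ^ L + b ^ s * m₁ ^ L :=
    rpow_convexCombination_le ha hb hab hs hsL hm₀ hm₁
  have hp_pow : ‖p‖ ^ r ≤ a ^ s * ‖p₀‖ ^ r + b ^ s * ‖p₁‖ ^ r :=
    norm_convexCombination_rpow_le ha hb hab hs le_rfl p₀ p₁
  calc m * ‖F p‖ ≤ m * (C * (‖p‖ ^ k + 1)) := mul_le_mul_of_nonneg_left (hF p) hm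
    _ = C * (m * (‖p‖ ^ k + 1)) := mul_left_comm m C _
    _ ≤ C * (2 * (m ^ L + ‖p‖ ^ r + 1)) :=
        mul_le_mul_of_nonneg_left (mul_rpow_add_one_le hk.ne' hL hm (norm_nonneg p)) hC
    _ = 2 * C * (m ^ L + ‖p‖ ^ r + 1) := by ring
    _ ≤ _ := mul_le_mul_of_nonneg_left (by linarith) (by positivity)

/-- Lemma 2.12: convex combination bound on the transport flux `m ∇H`. With
`γ = α(β+1)/β`, `γ' = γ/(γ-1)` and `|∇H p| ≤ C(‖p‖^(α-1) + 1)`, there is `C' > 1`,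
independent of `p₀, p₁, m₀, m₁, θ`, such that
`m_θ |∇H p_θ| ≤ C' (θ^(min (γ-1) 1) (‖p₁‖^(γ-1) + m₁^((β+1)/γ')) + (1-θ)^(min (γ-1) 1) (‖p₀‖^(γ-1) + m₀^((β+1)/γ')) + 1)`. -/
theorem stmt_9 {d : ℕ} (α β γ γ' : ℝ) (hα : 1 < α) (hβ : 0 < β)
    (hγ : γ = α * (β + 1) / β) (hγ' : γ' = γ / (γ - 1))
    (H : EuclideanSpace ℝ (Fin d) → ℝ)
    (H' : EuclideanSpace ℝ (Fin d) → EuclideanSpace ℝ (Fin d))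
    (hdiff : ∀ p, HasGradientAt H (H' p) p)
    (C : ℝ) (hC : 1 < C)
    (hgrad : ∀ p, ‖H' p‖ ≤ C * (‖p‖ ^ (α - 1) + 1)) :
    ∃ C' : ℝ, 1 < C' ∧
      ∀ (p₀ p₁ : EuclideanSpace ℝ (Fin d)) (m₀ m₁ θ : ℝ),
        0 ≤ m₀ → 0 ≤ m₁ → 0 ≤ θ → θ ≤ 1 →
        ((1 - θ) * m₀ + θ * m₁) * ‖H' ((1 - θ) • p₀ + θ • p₁)‖ ≤
          C' * (θ ^ min (γ - 1) 1 * (‖p₁‖ ^ (γ - 1) + m₁ ^ ((β + 1) / γ')) +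
            (1 - θ) ^ min (γ - 1) 1 * (‖p₀‖ ^ (γ - 1) + m₀ ^ ((β + 1) / γ')) + 1) := by
  subst hγ'
  exact ⟨2 * C, by linarith, fun p₀ p₁ _ _ θ hm₀ hm₁ hθ₀ hθ₁ ↦
    stmt_9_general (sub_pos.2 hα) (holderConjugate_growth_exponents hα hβ hγ) hgrad p₀ p₁ hm₀ hm₁
      (sub_nonneg.2 hθ₁) hθ₀ (sub_add_cancel 1 θ)⟩
end

section
/- Let α > 1 and β > 0, set γ := α(β+1)/β, let g : [0,∞) → ℝ be continuous and strictly increasing with C⁻¹ m^β − C ≤ g(m) ≤ C m^β + C for all m ≥ 0adelphia, with extended inverse g⁻¹, and let H : ℝ^d → ℝ be differentiable with |∇H(p)| ≤ C(|p|^{α−1} + 1), H(p) ≤ C|p|^α + C and H(p) ≥ C⁻¹|p|^α − C for all p ∈ ℝ^d, for some constant C > 1. For p₀, p₁ ∈ ℝ^d and θ ∈ [0,1] set p_θ = (1−θ)p₀ + θp₁. Then there exists a constant C' > 1, independent of p₀, p₁, θ, such that g⁻¹(H(p_θ)) · |∇H(p_θ)| ≤ C' ( θ^{min(γ−1,1)}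 |p₁|^{γ−1} + (1−θ)^{min(γ−1,1)} |p₀|^{γ−1} + 1 ). -/
/-!
Evaluating the lower growth bound of `g` at `m = g⁻¹(z)` gives `g⁻¹(z)^β ≲ z + C`, so
`g⁻¹(H p) ≲ |p|^(α/β) + 1`. Multiplying by `|∇H p| ≲ |p|^(α-1) + 1` adds the exponents to
`α/β + (α-1) = γ-1`. At `p = p_θ`, the power `|p_θ|^(γ-1)` is split by convexity of
`t ↦ t^(γ-1)` if `γ ≥ 2` and by its subadditivity if `γ < 2`; in the latter case the weights
are raised to the power `γ-1`, whence the exponent `min (γ-1) 1`.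
-/

section RpowInequalities

variable {a b u v x s t : ℝ}

theorem rpow_convexComb_le (hs : 0 ≤ s) (ha : 0 ≤ a) (hb : 0 ≤ b) (hu : 0 ≤ u) (hv : 0 ≤ v)
    (huv : u + v = 1) :
    (u * a + v * b) ^ s ≤ u ^ min s 1 * a ^ s + v ^ min s 1 * b ^ s := by
  rcases le_total s 1 with s_le_one | one_le_s
  · rw [min_eq_left s_le_one, ← Real.mul_rpow hu ha, ← Real.mul_rpow hv hb]
    exact Real.rpow_add_le_add_rpow (mul_nonneg hu ha) (mul_nonneg hv hb) hs s_le_one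
  · rw [min_eq_right one_le_s, Real.rpow_one, Real.rpow_one]
    exact (convexOn_rpow one_le_s).2 ha hb hu hv huv

theorem norm_convexComb_rpow_le {E : Type*} [SeminormedAddCommGroup E] [NormedSpace ℝ E]
    (hs : 0 ≤ s) (hu : 0 ≤ u) (hv : 0 ≤ v) (huv : u + v = 1) (p q : E) :
    ‖u • p + v • q‖ ^ s ≤ u ^ min s 1 * ‖p‖ ^ s + v ^ min s 1 * ‖q‖ ^ s := by
  have norm_le : ‖u • p + v • q‖ ≤ u * ‖p‖ + v * ‖q‖ := by
    simpa only [norm_smul_of_nonneg hu, norm_smul_of_nonneg hv] using norm_add_le (u • p) (v • q)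
  exact (Real.rpow_le_rpow (norm_nonneg _) norm_le hs).trans
    (rpow_convexComb_le hs (norm_nonneg p) (norm_nonneg q) hu hv huv)

theorem add_rpow_le_two_rpow_mul (hs : 0 ≤ s) (ha : 0 ≤ a) (hb : 0 ≤ b) :
    (a + b) ^ s ≤ 2 ^ s * (a ^ s + b ^ s) := by
  have rpow_max_le : max a b ^ s ≤ a ^ s + b ^ s := by
    rw [(Real.monotoneOn_rpow_Ici_of_exponent_nonneg hs).map_max ha hb]
    exact max_le_add_of_nonneg (Real.rpow_nonneg ha s) (Real.rpow_nonneg hb s)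
  calc (a + b) ^ s ≤ (2 * max a b) ^ s := by
        rw [two_mul]
        gcongr
        exacts [le_max_left a b, le_max_right a b]
    _ = 2 ^ s * max a b ^ s := Real.mul_rpow zero_le_two (le_max_of_le_left ha)
    _ ≤ 2 ^ s * (a ^ s + b ^ s) := by gcongr

theorem rpow_add_one_mul_rpow_add_one_le (hx : 0 ≤ x) (hs : 0 ≤ s) (ht : 0 ≤ t) :
    (x ^ s + 1) * (x ^ t + 1) ≤ 2 * (x ^ (s + t) + 1) := by
  have same_sign : 0 ≤ (x ^ s - 1) * (x ^ t - 1) := by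
    rcases le_total x 1 with x_le_one | one_le_x
    · exact mul_nonneg_of_nonpos_of_nonpos
        (sub_nonpos.2 (Real.rpow_le_one hx x_le_one hs))
        (sub_nonpos.2 (Real.rpow_le_one hx x_le_one ht))
    · exact mul_nonneg (sub_nonneg.2 (Real.one_le_rpow one_le_x hs))
        (sub_nonneg.2 (Real.one_le_rpow one_le_x ht))
  rw [Real.rpow_add_of_nonneg hx hs ht]
  linarith

end RpowInequalities

/-- `ginv` is an extended inverse of `g : [0, ∞) → ℝ`: a right inverse of `g` on `[g 0, ∞)`,
extended by `0` below `g 0`. As `g` is encoded as a function on all of `ℝ`, the condition that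
`ginv` takes values in `[0, ∞)` is a separate field. -/
structure IsExtendedInverse (g ginv : ℝ → ℝ) : Prop where
  nonneg : ∀ z, 0 ≤ ginv z
  apply_of_le : ∀ z, g 0 ≤ z → g (ginv z) = z
  eq_zero_of_lt : ∀ z, z < g 0 → ginv z = 0

namespace IsExtendedInverse

variable {g ginv : ℝ → ℝ} {β c C : ℝ}

theorem le_rpow_inv (h : IsExtendedInverse g ginv) (hβ : 0 < β) (hc : 0 < c)
    (hg : ∀ m, 0 ≤ m → c * m ^ β - C ≤ g m) {z w : ℝ} (hzw : z ≤ w) (hw : 0 ≤ w + C) :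
    ginv z ≤ ((w + C) / c) ^ β⁻¹ := by
  have base_nonneg : 0 ≤ (w + C) / c := div_nonneg hw hc.le
  rcases lt_or_ge z (g 0) with hz | hz
  · rw [h.eq_zero_of_lt z hz]
    exact Real.rpow_nonneg base_nonneg _
  · rw [Real.le_rpow_inv_iff_of_pos (h.nonneg z) base_nonneg hβ, le_div_iff₀' hc]
    have growth := hg (ginv z) (h.nonneg z)
    rw [h.apply_of_le z hz] at growth
    linarith

theorem le_mul_rpow_add_one (h : IsExtendedInverse g ginv) (hβ : 0 < β) (hc : 0 < c) (hC : 0 ≤ C)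
    (hg : ∀ m, 0 ≤ m → c * m ^ β - C ≤ g m) {α x z : ℝ} (hx : 0 ≤ x) (hz : z ≤ C * x ^ α + C) :
    ginv z ≤ (4 * C / c) ^ β⁻¹ * (x ^ (α / β) + 1) := by
  have rpow_nonneg : 0 ≤ x ^ α := Real.rpow_nonneg hx α
  calc ginv z ≤ ((C * x ^ α + C + C) / c) ^ β⁻¹ :=
        h.le_rpow_inv hβ hc hg hz (by positivity)
    _ ≤ (2 * C / c * (x ^ α + 1)) ^ β⁻¹ := by
        rw [div_mul_eq_mul_div]
        gcongr
        nlinarith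
    _ = (2 * C / c) ^ β⁻¹ * (x ^ α + 1) ^ β⁻¹ := Real.mul_rpow (by positivity) (by positivity)
    _ ≤ (2 * C / c) ^ β⁻¹ * (2 ^ β⁻¹ * ((x ^ α) ^ β⁻¹ + 1 ^ β⁻¹)) := by
        gcongr
        exact add_rpow_le_two_rpow_mul (inv_nonneg.2 hβ.le) rpow_nonneg zero_le_one
    _ = (4 * C / c) ^ β⁻¹ * (x ^ (α / β) + 1) := by
        rw [← mul_assoc, ← Real.mul_rpow (by positivity) zero_le_two, ← Real.rpow_mul hx,
          Real.one_rpow, ← div_eq_mul_inv]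
        ring_nf

theorem mul_le_mul_rpow_add_one (h : IsExtendedInverse g ginv) (hβ : 0 < β) (hc : 0 < c)
    (hC : 0 ≤ C) (hg : ∀ m, 0 ≤ m → c * m ^ β - C ≤ g m) {α x y z : ℝ} (hα : 1 ≤ α) (hx : 0 ≤ x)
    (hz : z ≤ C * x ^ α + C) (hy : y ≤ C * (x ^ (α - 1) + 1)) :
    ginv z * y ≤ 2 * (4 * C / c) ^ β⁻¹ * C * (x ^ (α / β + (α - 1)) + 1) := by
  set K := (4 * C / c) ^ β⁻¹
  calc ginv z * y ≤ K * (x ^ (α / β) + 1) * (C * (x ^ (α - 1) + 1)) :=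
        mul_le_mul_of_nonneg (h.le_mul_rpow_add_one hβ hc hC hg hx hz) hy (h.nonneg z)
          (by positivity)
    _ = K * C * ((x ^ (α / β) + 1) * (x ^ (α - 1) + 1)) := by ring
    _ ≤ K * C * (2 * (x ^ (α / β + (α - 1)) + 1)) :=
        mul_le_mul_of_nonneg_left
          (rpow_add_one_mul_rpow_add_one_le hx (by positivity) (sub_nonneg.2 hα)) (by positivity)
    _ = 2 * K * C * (x ^ (α / β + (α - 1)) + 1) := by ring

end IsExtendedInverse

theorem stmt_10_general {E : Type*} [NormedAddCommGroup E] [NormedSpace ℝ E]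
    {α β γ : ℝ} (hα : 1 ≤ α) (hβ : 0 < β) (hγ : γ = α * (β + 1) / β)
    {g ginv : ℝ → ℝ} (hginv : IsExtendedInverse g ginv) {C : ℝ} (hC : 1 < C)
    (hg : ∀ m, 0 ≤ m → C⁻¹ * m ^ β - C ≤ g m)
    {H : E → ℝ} {H' : E → StrongDual ℝ E} (hdiff : ∀ p, HasFDerivAt H (H' p) p)
    (hgrad : ∀ p, ‖H' p‖ ≤ C * (‖p‖ ^ (α - 1) + 1)) (hub : ∀ p, H p ≤ C * ‖p‖ ^ α + C) :
    ∃ C' : ℝ, 1 < C' ∧ ∀ (p₀ p₁ : E) (θ : ℝ), 0 ≤ θ → θ ≤ 1 →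
      ginv (H ((1 - θ) • p₀ + θ • p₁)) * ‖H' ((1 - θ) • p₀ + θ • p₁)‖ ≤
        C' * (θ ^ min (γ - 1) 1 * ‖p₁‖ ^ (γ - 1) +
          (1 - θ) ^ min (γ - 1) 1 * ‖p₀‖ ^ (γ - 1) + 1) := by
  have C_pos : 0 < C := one_pos.trans hC
  have exponent_eq : α / β + (α - 1) = γ - 1 := by rw [hγ]; field_simp; ring
  have exponent_nonneg : 0 ≤ γ - 1 := by
    rw [← exponent_eq]
    exact add_nonneg (by positivity) (sub_nonneg.2 hα)
  set K := (4 * C / C⁻¹) ^ β⁻¹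
  have one_lt_K : 1 < K := by
    refine Real.one_lt_rpow ?_ (inv_pos.2 hβ)
    rw [div_inv_eq_mul]
    nlinarith
  have product_le (p : E) : ginv (H p) * ‖H' p‖ ≤ 2 * K * C * (‖p‖ ^ (γ - 1) + 1) :=
    exponent_eq ▸ hginv.mul_le_mul_rpow_add_one hβ (inv_pos.2 C_pos) C_pos.le hg hα
      (norm_nonneg p) (hub p) (hgrad p)
  refine ⟨2 * K * C, by nlinarith, fun p₀ p₁ θ hθ₀ hθ₁ => (product_le _).trans ?_⟩
  gcongr
  rw [add_comm (θ ^ _ * _)]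
  exact norm_convexComb_rpow_le exponent_nonneg (sub_nonneg.2 hθ₁) hθ₀ (sub_add_cancel 1 θ) p₀ p₁

/-- Lemma 2.13: composite convex combination bound on `g⁻¹(H(p_θ)) |∇H(p_θ)|`.
With `γ = α(β+1)/β`, `g` continuous, strictly increasing, of polynomial growth with
extended inverse `ginv`, and `H` differentiable with the stated growth and coercivity
bounds, there is `C' > 1`, independent of `p₀, p₁, θ`, such that
`ginv (H p_θ) * |∇H p_θ| ≤ C' (θ^(min (γ-1) 1) ‖p₁‖^(γ-1) + (1-θ)^(min (γ-1) 1) ‖p₀‖^(γ-1) + 1)`. -/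
theorem stmt_10 {d : ℕ} (α β γ : ℝ) (hα : 1 < α) (hβ : 0 < β)
    (hγ : γ = α * (β + 1) / β)
    (g : ℝ → ℝ)
    (hcont : ContinuousOn g (Set.Ici 0))
    (hmono : StrictMonoOn g (Set.Ici 0))
    (C : ℝ) (hC : 1 < C)
    (hbound : ∀ m : ℝ, 0 ≤ m → C⁻¹ * m ^ β - C ≤ g m ∧ g m ≤ C * m ^ β + C)
    (ginv : ℝ → ℝ)
    (hginv_nonneg : ∀ z : ℝ, 0 ≤ ginv z)
    (hginv_inv : ∀ z : ℝ, g 0 ≤ z → g (ginv z) = z)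
    (hginv_zero : ∀ z : ℝ, z < g 0 → ginv z = 0)
    (H : EuclideanSpace ℝ (Fin d) → ℝ)
    (H' : EuclideanSpace ℝ (Fin d) → EuclideanSpace ℝ (Fin d))
    (hdiff : ∀ p, HasGradientAt H (H' p) p)
    (hgrad : ∀ p, ‖H' p‖ ≤ C * (‖p‖ ^ (α - 1) + 1))
    (hub : ∀ p, H p ≤ C * ‖p‖ ^ α + C)
    (hlb : ∀ p, C⁻¹ * ‖p‖ ^ α - C ≤ H p) :
    ∃ C' : ℝ, 1 < C' ∧
      ∀ (p₀ p₁ : EuclideanSpace ℝ (Fin d)) (θ : ℝ), 0 ≤ θ → θ ≤ 1 →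
        ginv (H ((1 - θ) • p₀ + θ • p₁)) * ‖H' ((1 - θ) • p₀ + θ • p₁)‖ ≤
          C' * (θ ^ min (γ - 1) 1 * ‖p₁‖ ^ (γ - 1) +
            (1 - θ) ^ min (γ - 1) 1 * ‖p₀‖ ^ (γ - 1) + 1) := by
  have general := stmt_10_general hα.le hβ hγ ⟨hginv_nonneg, hginv_inv, hginv_zero⟩ hC
    (fun m hm => (hbound m hm).1) (fun p => (hdiff p).hasFDerivAt)
    (fun p => (LinearIsometryEquiv.norm_map _ _).trans_le (hgrad p)) hub
  simpa only [LinearIsometryEquiv.norm_map] using general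
end

section
/- Let (Γ, 𝒜, μ) be a measure space with 0 < μ(Γ) < ∞, let γ > 1, let u : Γ → ℝ be measurable with ∫ |u|^γ dμ < ∞, and let J > 0. Then there exists a unique κ ∈ ℝ such that ∫_Γ (max(u + κ, 0))^{γ−1} dμ = J. -/
open MeasureTheory

/-!
Write `F κ = ∫ φ (u + κ) dμ` for a continuous monotone profile `φ` that vanishes at `-∞`, is
unbounded, and is strictly increasing where it is positive; the theorem is the case
`φ t = max t 0 ^ (γ - 1)`. Monotonicity of `φ` provides the integrable bounds, so dominated
convergence gives continuity of `F` and `F → 0` at `-∞`. Some set `{c ≤ u}` has positive measure,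
and Markov's inequality gives `F κ ≥ φ (c + κ) μ {c ≤ u}`, which is unbounded. Hence `F` takes every
value `J > 0`. If `F κ > 0`, then `φ (u + κ) > 0` on a set of positive measure, so `F` is strictly
increasing at `κ` and `J` is attained only once.
-/

open Filter Set Topology

section Profile

variable {Γ : Type*} [MeasurableSpace Γ] {μ : Measure Γ} {u : Γ → ℝ} {φ : ℝ → ℝ}

theorem continuous_integral_comp_add (hφ_cont : Continuous φ) (hφ_mono : Monotone φ)
    (h_int : ∀ κ, Integrable (fun x => φ (u x + κ)) μ) :
    Continuous fun κ => ∫ x, φ (u x + κ) ∂μ := by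
  refine continuous_iff_continuousAt.2 fun κ => ?_
  refine continuousAt_of_dominated (.of_forall fun k => (h_int k).aestronglyMeasurable) ?_
    ((h_int (κ - 1)).abs.sup (h_int (κ + 1)).abs) (.of_forall fun x => ?_)
  · filter_upwards [Icc_mem_nhds (sub_one_lt κ) (lt_add_one κ)] with k hk
    exact .of_forall fun x => abs_le_max_abs_abs
      (hφ_mono (add_le_add_right hk.1 _)) (hφ_mono (add_le_add_right hk.2 _))
  · exact (hφ_cont.comp (continuous_const_add (u x))).continuousAt

theorem tendsto_integral_comp_add_atBot (hφ_mono : Monotone φ) (hφ_bot : Tendsto φ atBot (𝓝 0))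
    (h_int : ∀ κ, Integrable (fun x => φ (u x + κ)) μ) :
    Tendsto (fun κ => ∫ x, φ (u x + κ) ∂μ) atBot (𝓝 0) := by
  rw [← integral_zero Γ ℝ]
  refine tendsto_integral_filter_of_dominated_convergence (fun x => φ (u x + 0))
    (.of_forall fun k => (h_int k).aestronglyMeasurable) ?_ (h_int 0) (.of_forall fun x => ?_)
  · filter_upwards [eventually_le_atBot 0] with k hk
    refine .of_forall fun x => ?_
    rw [Real.norm_of_nonneg (hφ_mono.le_of_tendsto hφ_bot _)]
    exact hφ_mono (add_le_add_right hk _)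
  · exact hφ_bot.comp (tendsto_atBot_add_const_left _ _ tendsto_id)

theorem exists_measure_setOf_le_ne_zero [NeZero μ] (u : Γ → ℝ) : ∃ c, μ {x | c ≤ u x} ≠ 0 := by
  by_contra! h_null
  have h_lt : ∀ᵐ x ∂μ, ∀ n : ℕ, u x < -n :=
    ae_all_iff.2 fun n => by simpa only [ae_iff, not_lt] using h_null (-n)
  obtain ⟨x, hx⟩ := h_lt.exists
  obtain ⟨n, hn⟩ := exists_nat_ge (-u x)
  linarith [hx n]

theorem measure_setOf_le_lt_top (hφ_mono : Monotone φ) {c κ : ℝ} (hφ_pos : 0 < φ (c + κ))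
    (h_int : Integrable (fun x => φ (u x + κ)) μ) : μ {x | c ≤ u x} < ⊤ :=
  (measure_mono fun _ hx => (hφ_mono (add_le_add_left hx κ)).trans (le_abs_self _)).trans_lt
    (h_int.measure_norm_ge_lt_top hφ_pos)

theorem mul_measureReal_le_integral_comp_add (hφ_mono : Monotone φ) (hφ_nonneg : ∀ t, 0 ≤ φ t)
    {κ : ℝ} (h_int : Integrable (fun x => φ (u x + κ)) μ) (c : ℝ) :
    φ (c + κ) * μ.real {x | c ≤ u x} ≤ ∫ x, φ (u x + κ) ∂μ := by
  have hf_nonneg : ∀ x, 0 ≤ φ (u x + κ) := fun x => hφ_nonneg _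
  rcases (hφ_nonneg (c + κ)).eq_or_lt' with hφ_zero | hφ_pos
  · simpa only [hφ_zero, zero_mul] using integral_nonneg hf_nonneg
  have h_fin : μ {x | φ (c + κ) ≤ φ (u x + κ)} ≠ ⊤ := by
    simpa only [Real.norm_of_nonneg (hf_nonneg _)] using
      (h_int.measure_norm_ge_lt_top hφ_pos).ne
  calc φ (c + κ) * μ.real {x | c ≤ u x}
      ≤ φ (c + κ) * μ.real {x | φ (c + κ) ≤ φ (u x + κ)} := by
        refine mul_le_mul_of_nonneg_left (measureReal_mono ?_ h_fin) hφ_pos.le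
        exact fun x hx => hφ_mono (add_le_add_left hx κ)
    _ ≤ ∫ x, φ (u x + κ) ∂μ :=
        mul_meas_ge_le_integral_of_nonneg (.of_forall hf_nonneg) h_int _

theorem tendsto_integral_comp_add_atTop [NeZero μ] (hφ_mono : Monotone φ)
    (hφ_nonneg : ∀ t, 0 ≤ φ t) (hφ_top : Tendsto φ atTop atTop)
    (h_int : ∀ κ, Integrable (fun x => φ (u x + κ)) μ) :
    Tendsto (fun κ => ∫ x, φ (u x + κ) ∂μ) atTop atTop := by
  obtain ⟨c, hc⟩ := exists_measure_setOf_le_ne_zero (μ := μ) u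
  have hφ_shift : Tendsto (fun κ => φ (c + κ)) atTop atTop :=
    hφ_top.comp (tendsto_atTop_add_const_left _ _ tendsto_id)
  obtain ⟨κ, hκ⟩ := (hφ_shift.eventually_gt_atTop 0).exists
  have h_pos : 0 < μ.real {x | c ≤ u x} :=
    ENNReal.toReal_pos hc (measure_setOf_le_lt_top hφ_mono hκ (h_int κ)).ne
  exact tendsto_atTop_mono
    (fun κ => mul_measureReal_le_integral_comp_add hφ_mono hφ_nonneg (h_int κ) c)
    (hφ_shift.atTop_mul_const h_pos)

theorem strictMonoOn_integral_comp_add (hφ_mono : Monotone φ) (hφ_nonneg : ∀ t, 0 ≤ φ t)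
    (hφ_strict : StrictMonoOn φ {t | 0 < φ t})
    (h_int : ∀ κ, Integrable (fun x => φ (u x + κ)) μ) :
    StrictMonoOn (fun κ => ∫ x, φ (u x + κ) ∂μ) {κ | 0 < ∫ x, φ (u x + κ) ∂μ} := by
  intro a ha b _ hab
  have h_le : ∀ x, φ (u x + a) ≤ φ (u x + b) := fun x => hφ_mono (add_le_add_right hab.le _)
  have h_support : Function.support (fun x => φ (u x + a)) ⊆
      Function.support fun x => φ (u x + b) - φ (u x + a) := by
    intro x hx
    have hx_pos : 0 < φ (u x + a) := (hφ_nonneg _).lt_of_ne' hx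
    exact (sub_pos.2 (hφ_strict hx_pos (hx_pos.trans_le (h_le x)) (add_lt_add_right hab _))).ne'
  have ha_support : 0 < μ (Function.support fun x => φ (u x + a)) :=
    (integral_pos_iff_support_of_nonneg (fun x => hφ_nonneg _) (h_int a)).1 ha
  have h_sub_pos : 0 < ∫ x, (φ (u x + b) - φ (u x + a)) ∂μ :=
    (integral_pos_iff_support_of_nonneg (fun x => sub_nonneg.2 (h_le x))
      ((h_int b).sub (h_int a))).2 (ha_support.trans_le (measure_mono h_support))
  rwa [integral_sub (h_int b) (h_int a), sub_pos] at h_sub_pos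

theorem existsUnique_integral_comp_add_eq [NeZero μ] (hφ_cont : Continuous φ)
    (hφ_mono : Monotone φ) (hφ_strict : StrictMonoOn φ {t | 0 < φ t})
    (hφ_bot : Tendsto φ atBot (𝓝 0)) (hφ_top : Tendsto φ atTop atTop)
    (h_int : ∀ κ, Integrable (fun x => φ (u x + κ)) μ) {J : ℝ} (hJ : 0 < J) :
    ∃! κ, ∫ x, φ (u x + κ) ∂μ = J := by
  have hφ_nonneg : ∀ t, 0 ≤ φ t := hφ_mono.le_of_tendsto hφ_bot
  obtain ⟨κ, hκ⟩ := mem_range_of_exists_le_of_exists_ge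
    (continuous_integral_comp_add hφ_cont hφ_mono h_int)
    ((tendsto_integral_comp_add_atBot hφ_mono hφ_bot h_int).eventually_le_const hJ).exists
    ((tendsto_integral_comp_add_atTop hφ_mono hφ_nonneg hφ_top h_int).eventually_ge_atTop J).exists
  refine ⟨κ, hκ, fun k hk => ?_⟩
  exact (strictMonoOn_integral_comp_add hφ_mono hφ_nonneg hφ_strict h_int).injOn
    (hJ.trans_eq hk.symm) (hJ.trans_eq hκ.symm) (hk.trans hκ.symm)

end Profile

section PosPartRpow

variable {p : ℝ}

theorem continuous_max_zero_rpow (hp : 0 ≤ p) : Continuous fun t : ℝ => max t 0 ^ p :=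
  (continuous_id.max continuous_const).rpow_const fun _ => .inr hp

theorem monotone_max_zero_rpow (hp : 0 ≤ p) : Monotone fun t : ℝ => max t 0 ^ p :=
  fun _ _ hst => Real.rpow_le_rpow (le_max_right _ _) (max_le_max_right 0 hst) hp

theorem max_zero_rpow_pos_iff (hp : 0 < p) {t : ℝ} : 0 < max t 0 ^ p ↔ 0 < t := by
  refine ⟨fun h_pos => ?_, fun ht => Real.rpow_pos_of_pos (lt_max_of_lt_left ht) p⟩
  contrapose! h_pos
  rw [max_eq_right h_pos, Real.zero_rpow hp.ne']

theorem strictMonoOn_max_zero_rpow (hp : 0 < p) :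
    StrictMonoOn (fun t : ℝ => max t 0 ^ p) (Ici 0) := by
  intro s (hs : 0 ≤ s) t (ht : 0 ≤ t) hst
  simpa only [max_eq_left hs, max_eq_left ht] using Real.rpow_lt_rpow hs hst hp

theorem tendsto_max_zero_rpow_atBot (hp : p ≠ 0) :
    Tendsto (fun t : ℝ => max t 0 ^ p) atBot (𝓝 0) := by
  refine tendsto_const_nhds.congr' ?_
  filter_upwards [eventually_le_atBot 0] with t ht
  rw [max_eq_right ht, Real.zero_rpow hp]

theorem tendsto_max_zero_rpow_atTop (hp : 0 < p) :
    Tendsto (fun t : ℝ => max t 0 ^ p) atTop atTop :=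
  (tendsto_rpow_atTop hp).comp (tendsto_atTop_mono (fun t => le_max_left t 0) tendsto_id)

theorem integrable_max_add_zero_rpow {Γ : Type*} [MeasurableSpace Γ] {μ : Measure Γ}
    [IsFiniteMeasure μ] {u : Γ → ℝ} (hp : 0 ≤ p) (hu : MemLp u (ENNReal.ofReal p) μ) (κ : ℝ) :
    Integrable (fun x => max (u x + κ) 0 ^ p) μ := by
  have h_posPart : MemLp (fun x => max (u x + κ) 0) (ENNReal.ofReal p) μ :=
    (hu.add (memLp_const κ)).pos_part
  simpa only [Real.norm_of_nonneg (le_max_right _ _), ENNReal.toReal_ofReal hp] using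
    h_posPart.integrable_norm_rpow'

theorem memLp_ofReal_of_integrable_abs_rpow {Γ : Type*} [MeasurableSpace Γ] {μ : Measure Γ}
    {u : Γ → ℝ} (hp : 0 < p) (hu_meas : AEStronglyMeasurable u μ)
    (hu_int : Integrable (fun x => |u x| ^ p) μ) : MemLp u (ENNReal.ofReal p) μ := by
  rw [← integrable_norm_rpow_iff hu_meas (ENNReal.ofReal_pos.2 hp).ne' ENNReal.ofReal_ne_top]
  simpa only [ENNReal.toReal_ofReal hp.le, Real.norm_eq_abs] using hu_int

end PosPartRpow

theorem stmt_16_general {Γ : Type*} [MeasurableSpace Γ] {μ : Measure Γ} [NeZero μ] {p : ℝ}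
    (hp : 0 < p) {u : Γ → ℝ} (h_int : ∀ κ, Integrable (fun x => max (u x + κ) 0 ^ p) μ)
    {J : ℝ} (hJ : 0 < J) : ∃! κ : ℝ, ∫ x, max (u x + κ) 0 ^ p ∂μ = J :=
  existsUnique_integral_comp_add_eq (φ := fun t => max t 0 ^ p) (continuous_max_zero_rpow hp.le)
    (monotone_max_zero_rpow hp.le)
    ((strictMonoOn_max_zero_rpow hp).mono fun _ ht => ((max_zero_rpow_pos_iff hp).1 ht).le)
    (tendsto_max_zero_rpow_atBot hp.ne') (tendsto_max_zero_rpow_atTop hp) h_int hJ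

/-- Lemma 5.4 (choice of the compatible representative): on a measure space with
`0 < μ(Γ) < ∞`, for `γ > 1`, `u` measurable with `∫ |u|^γ dμ < ∞` and `J > 0`,
there is a unique `κ ∈ ℝ` with `∫ (u + κ)₊^(γ-1) dμ = J`. -/
theorem stmt_16 {Γ : Type*} [MeasurableSpace Γ] (μ : Measure Γ)
    (hμpos : 0 < μ Set.univ) (hμfin : μ Set.univ < ⊤)
    (γ : ℝ) (hγ : 1 < γ)
    (u : Γ → ℝ) (hu_meas : Measurable u)
    (hu_int : Integrable (fun x => |u x| ^ γ) μ)
    (J : ℝ) (hJ : 0 < J) :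
    ∃! κ : ℝ, ∫ x, (max (u x + κ) 0) ^ (γ - 1) ∂μ = J := by
  have : IsFiniteMeasure μ := ⟨hμfin⟩
  have : NeZero μ := ⟨Measure.measure_univ_ne_zero.1 hμpos.ne'⟩
  have hu_memLp : MemLp u (ENNReal.ofReal (γ - 1)) μ :=
    (memLp_ofReal_of_integrable_abs_rpow (zero_lt_one.trans hγ)
      hu_meas.aestronglyMeasurable hu_int).mono_exponent
      (ENNReal.ofReal_le_ofReal (sub_le_self γ zero_le_one))
  exact stmt_16_general (sub_pos.2 hγ)
    (integrable_max_add_zero_rpow (sub_pos.2 hγ).le hu_memLp) hJ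
end

section
/- Let (Γ, 𝒜, μ) be a measure space with 0 < μ(Γ) < ∞, let γ > 1, let u₀, u₁ : Γ → ℝ be measurable with ∫ |u₀|^γ dμ < ∞ and ∫ |u₁|^γ dμ < ∞, and let J > 0. For θ ∈ [0,1] set u_θ := (1−θ)u₀ + θu₁, and let κ_θ be the unique real number with ∫_Γ (max(u_θ + κ_θ, 0))^{γ−1} dμ = J. Then the map θ ↦ κ_θ is continuous on [0,1]. -/
open MeasureTheory

/-!
For fixed `v`, the moment `c ↦ ∫ (v + c)₊ ^ p` is strictly increasing wherever it is finite and
nonzero. Hence `κ` converges to the root `c` for `v` as soon as, at every constant `b ≠ c`, the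
moments of functions tending to `v` eventually stay on the same side of the prescribed value as the
moment of `v`. For `b > c` this is Fatou's lemma. For `b < c`, if the functions are at most `v + h`
with `h ∈ L^q`, they are dominated by `v + h + b = (v + c) + h - (c - b)`, whose positive part lives
on a set of finite measure by Chebyshev's inequality; there `h` is also in `L^p`, and dominated
convergence applies.
-/

open Filter Topology
open scoped ENNReal

section PosPartMoment

variable {α : Type*} [MeasurableSpace α] {μ : Measure α} {p : ℝ} {q : ℝ≥0∞} {f g h : α → ℝ}

/-- The `p`-th moment `∫ f₊ ^ p ∂μ` of the positive part of `f`, as an extended nonnegative real, so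
that divergence is recorded as `∞`. The truncation `f₊` is carried out by `ENNReal.ofReal`. -/
noncomputable def posPartMoment (μ : Measure α) (p : ℝ) (f : α → ℝ) : ℝ≥0∞ :=
  ∫⁻ x, ENNReal.ofReal (f x) ^ p ∂μ

theorem ofReal_max_zero (y : ℝ) : ENNReal.ofReal (max y 0) = ENNReal.ofReal y := by
  rw [ENNReal.ofReal_max, ENNReal.ofReal_zero, max_eq_left zero_le]

theorem posPartMoment_mono (hp : 0 ≤ p) (hfg : f ≤ᵐ[μ] g) :
    posPartMoment μ p f ≤ posPartMoment μ p g :=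
  lintegral_mono_ae <| hfg.mono fun _ hx =>
    ENNReal.rpow_le_rpow (ENNReal.ofReal_le_ofReal hx) hp

theorem posPartMoment_add_const_mono (hp : 0 ≤ p) (f : α → ℝ) :
    Monotone fun c : ℝ => posPartMoment μ p fun x => f x + c :=
  fun _ _ hab => posPartMoment_mono hp <| .of_forall fun _ => add_le_add_right hab _

theorem posPartMoment_lt_posPartMoment (hp : 0 < p) (hg : AEMeasurable g μ)
    (hfg : ∀ᵐ x ∂μ, f x < g x) (hf_top : posPartMoment μ p f ≠ ∞)
    (hg_zero : posPartMoment μ p g ≠ 0) :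
    posPartMoment μ p f < posPartMoment μ p g := by
  have hpos : μ {x | 0 < g x} ≠ 0 := by
    contrapose! hg_zero
    refine lintegral_eq_zero_of_ae_eq_zero ?_
    filter_upwards [measure_eq_zero_iff_ae_notMem.1 hg_zero] with x hx
    simp [ENNReal.ofReal_of_nonpos (not_lt.1 hx), hp]
  refine lintegral_strict_mono_of_ae_le_of_ae_lt_on (hg.ennreal_ofReal.pow_const p) hf_top
    (hfg.mono fun x hx => ?_) hpos (hfg.mono fun x hx hgx => ?_)
  · exact ENNReal.rpow_le_rpow (ENNReal.ofReal_le_ofReal hx.le) hp.le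
  · exact ENNReal.rpow_lt_rpow ((ENNReal.ofReal_lt_ofReal_iff hgx).2 hx) hp

theorem posPartMoment_eq_ofReal_of_integral_eq {J : ℝ} (hp : 0 ≤ p) (hJ : 0 < J)
    (hf : ∫ x, max (f x) 0 ^ p ∂μ = J) : posPartMoment μ p f = ENNReal.ofReal J := by
  have hint : Integrable (fun x => max (f x) 0 ^ p) μ :=
    not_imp_comm.1 integral_undef (hf ▸ hJ.ne')
  rw [← hf, ofReal_integral_eq_lintegral_ofReal hint (.of_forall fun x => by positivity)]
  refine lintegral_congr fun x => ?_
  rw [← ENNReal.ofReal_rpow_of_nonneg (le_max_right _ _) hp, ofReal_max_zero]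

theorem memLp_posPart_iff_posPartMoment_ne_top (hp : 0 < p) (hf : AEMeasurable f μ) :
    MemLp (fun x => max (f x) 0) (ENNReal.ofReal p) μ ↔ posPartMoment μ p f ≠ ∞ := by
  have hmeas : AEStronglyMeasurable (fun x => max (f x) 0) μ :=
    (hf.max aemeasurable_const).aestronglyMeasurable
  have henorm (x : α) : ‖max (f x) 0‖ₑ = ENNReal.ofReal (f x) := by
    rw [Real.enorm_of_nonneg (le_max_right _ _), ofReal_max_zero]
  rw [MemLp, and_iff_right hmeas, eLpNorm_lt_top_iff_lintegral_rpow_enorm_lt_top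
    (ENNReal.ofReal_pos.2 hp).ne' ENNReal.ofReal_ne_top, ENNReal.toReal_ofReal hp.le,
    lt_top_iff_ne_top]
  simp only [henorm, posPartMoment]

theorem memLp_ofReal_iff_integrable_abs_rpow (hp : 0 < p) (hf : AEStronglyMeasurable f μ) :
    MemLp f (ENNReal.ofReal p) μ ↔ Integrable (fun x => |f x| ^ p) μ := by
  rw [← integrable_norm_rpow_iff hf (ENNReal.ofReal_pos.2 hp).ne' ENNReal.ofReal_ne_top,
    ENNReal.toReal_ofReal hp.le]
  rfl

theorem measure_le_abs_lt_top_of_memLp (hf : MemLp f q μ) (hq_zero : q ≠ 0) (hq_top : q ≠ ∞)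
    {ε : ℝ} (hε : 0 < ε) : μ {x | ε ≤ |f x|} < ∞ := by
  simpa [Real.enorm_eq_ofReal_abs, ENNReal.ofReal_le_ofReal_iff] using
    hf.meas_ge_lt_top'_enorm hq_zero hq_top (ENNReal.ofReal_pos.2 hε).ne' (by simp)

theorem measure_pos_add_sub_lt_top (hp : 0 < p) (hq_zero : q ≠ 0) (hq_top : q ≠ ∞)
    (hf : AEMeasurable f μ) (hf_top : posPartMoment μ p f ≠ ∞) (hh : MemLp h q μ)
    {ε : ℝ} (hε : 0 < ε) : μ {x | 0 < f x + h x - ε} < ∞ := by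
  have hf_posPart := (memLp_posPart_iff_posPartMoment_ne_top hp hf).2 hf_top
  have hf_fin : μ {x | ε / 2 ≤ |max (f x) 0|} < ∞ :=
    measure_le_abs_lt_top_of_memLp hf_posPart (ENNReal.ofReal_pos.2 hp).ne'
      ENNReal.ofReal_ne_top (half_pos hε)
  have hh_fin : μ {x | ε / 2 ≤ |h x|} < ∞ :=
    measure_le_abs_lt_top_of_memLp hh hq_zero hq_top (half_pos hε)
  refine (measure_mono fun x hx => ?_).trans_lt (measure_union_lt_top hf_fin hh_fin)
  by_contra! hsmall
  simp only [Set.mem_union, Set.mem_ofPred_eq, not_or, not_le] at hx hsmall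
  linarith [le_max_left (f x) 0, le_abs_self (max (f x) 0), le_abs_self (h x)]

theorem posPartMoment_add_sub_ne_top (hp : 0 < p) (hpq : ENNReal.ofReal p ≤ q) (hq_top : q ≠ ∞)
    (hf : AEMeasurable f μ) (hf_top : posPartMoment μ p f ≠ ∞) (hh : MemLp h q μ)
    {ε : ℝ} (hε : 0 < ε) : posPartMoment μ p (fun x => f x + h x - ε) ≠ ∞ := by
  have hq_zero : q ≠ 0 := ((ENNReal.ofReal_pos.2 hp).trans_le hpq).ne'
  have hsum : AEMeasurable (fun x => f x + h x - ε) μ :=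
    (hf.add hh.aemeasurable).sub_const ε
  set S : Set α := toMeasurable μ {x | 0 < f x + h x - ε}
  have hS : μ S ≠ ∞ := by
    rw [measure_toMeasurable]
    exact (measure_pos_add_sub_lt_top hp hq_zero hq_top hf hf_top hh hε).ne
  have hhS : MemLp (S.indicator h) (ENNReal.ofReal p) μ :=
    (hh.indicator (measurableSet_toMeasurable _ _)).mono_exponent_of_measure_support_ne_top
      (fun _ hx => Set.indicator_of_notMem hx h) hS hpq
  have hf_posPart := (memLp_posPart_iff_posPartMoment_ne_top hp hf).2 hf_top
  refine (memLp_posPart_iff_posPartMoment_ne_top hp hsum).1 <|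
    (hf_posPart.add hhS.norm).mono'
      (hsum.max aemeasurable_const).aestronglyMeasurable (.of_forall fun x => ?_)
  have hbound_nonneg : 0 ≤ max (f x) 0 + ‖S.indicator h x‖ := by positivity
  rw [Real.norm_of_nonneg (le_max_right _ _)]
  refine max_le ?_ hbound_nonneg
  by_cases hx : 0 < f x + h x - ε
  · have hxS : x ∈ S := subset_toMeasurable μ _ hx
    simp only [Pi.add_apply, Set.indicator_of_mem hxS, Real.norm_eq_abs]
    linarith [le_max_left (f x) 0, le_abs_self (h x)]
  · exact (not_lt.1 hx).trans hbound_nonneg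

section Limits

variable {ι : Type*} {l : Filter ι} [l.IsCountablyGenerated] {u : ι → α → ℝ} {v : α → ℝ}

theorem tendsto_posPartMoment_of_dominated (hp : 0 ≤ p) (hu : ∀ i, AEMeasurable (u i) μ)
    (hug : ∀ᶠ i in l, u i ≤ᵐ[μ] g) (hg : posPartMoment μ p g ≠ ∞)
    (huv : ∀ᵐ x ∂μ, Tendsto (fun i => u i x) l (𝓝 (v x))) :
    Tendsto (fun i => posPartMoment μ p (u i)) l (𝓝 (posPartMoment μ p v)) := by
  refine tendsto_lintegral_filter_of_dominated_convergence'
    (fun x => ENNReal.ofReal (g x) ^ p) (.of_forall fun i => (hu i).ennreal_ofReal.pow_const p)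
    ?_ hg (huv.mono fun x hx => (ENNReal.tendsto_ofReal hx).ennrpow_const p)
  filter_upwards [hug] with i hi
  exact hi.mono fun x hx => ENNReal.rpow_le_rpow (ENNReal.ofReal_le_ofReal hx) hp

theorem posPartMoment_le_liminf [l.NeBot] (hu : ∀ i, AEMeasurable (u i) μ)
    (huv : ∀ᵐ x ∂μ, Tendsto (fun i => u i x) l (𝓝 (v x))) :
    posPartMoment μ p v ≤ liminf (fun i => posPartMoment μ p (u i)) l :=
  calc posPartMoment μ p v
      = ∫⁻ x, liminf (fun i => ENNReal.ofReal (u i x) ^ p) l ∂μ :=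
        lintegral_congr_ae <| huv.mono fun _ hx =>
          ((ENNReal.tendsto_ofReal hx).ennrpow_const p).liminf_eq.symm
    _ ≤ liminf (fun i => posPartMoment μ p (u i)) l :=
        lintegral_liminf_le' fun i => (hu i).ennreal_ofReal.pow_const p

theorem tendsto_of_posPartMoment_add_eq {κ : ι → ℝ} {c : ℝ} {M : ℝ≥0∞}
    (hp : 0 < p) (hpq : ENNReal.ofReal p ≤ q) (hq_top : q ≠ ∞)
    (hu : ∀ i, AEMeasurable (u i) μ) (hv : AEMeasurable v μ)
    (huv : ∀ᵐ x ∂μ, Tendsto (fun i => u i x) l (𝓝 (v x)))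
    (hh : MemLp h q μ) (huh : ∀ᶠ i in l, ∀ᵐ x ∂μ, u i x ≤ v x + h x)
    (hM_zero : M ≠ 0) (hM_top : M ≠ ∞)
    (hκ : ∀ᶠ i in l, posPartMoment μ p (fun x => u i x + κ i) = M)
    (hc : posPartMoment μ p (fun x => v x + c) = M) :
    Tendsto κ l (𝓝 c) := by
  rcases l.eq_or_neBot with rfl | _
  · exact tendsto_bot
  have hu_add (b : ℝ) (i : ι) : AEMeasurable (fun x => u i x + b) μ := (hu i).add_const b
  have huv_add (b : ℝ) : ∀ᵐ x ∂μ, Tendsto (fun i => u i x + b) l (𝓝 (v x + b)) :=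
    huv.mono fun x hx => hx.add_const b
  refine tendsto_order.2 ⟨fun a hac => ?_, fun b hcb => ?_⟩
  · have ha_le := posPartMoment_add_const_mono (μ := μ) hp.le v hac.le
    have ha_lt : posPartMoment μ p (fun x => v x + a) < M := hc ▸
      posPartMoment_lt_posPartMoment hp (hv.add_const c) (.of_forall fun x => by gcongr)
        (ne_top_of_le_ne_top hM_top (ha_le.trans_eq hc)) (hc ▸ hM_zero)
    have hbound_top := posPartMoment_add_sub_ne_top hp hpq hq_top (hv.add_const c)
      (hc ▸ hM_top) hh (sub_pos.2 hac)
    have hbound : ∀ᶠ i in l, (fun x => u i x + a) ≤ᵐ[μ] fun x => v x + c + h x - (c - a) :=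
      huh.mono fun i hi => hi.mono fun x hx => by linarith
    filter_upwards [(tendsto_posPartMoment_of_dominated hp.le (hu_add a) hbound hbound_top
      (huv_add a)).eventually_lt_const ha_lt, hκ] with i hi hκi
    exact (posPartMoment_add_const_mono hp.le (u i)).reflect_lt (hi.trans_eq hκi.symm)
  · have hb_le := posPartMoment_add_const_mono (μ := μ) hp.le v hcb.le
    have hb_lt : M < posPartMoment μ p (fun x => v x + b) := hc ▸
      posPartMoment_lt_posPartMoment hp (hv.add_const b) (.of_forall fun x => by gcongr)
        (hc ▸ hM_top) (ne_bot_of_le_ne_bot hM_zero (hc.symm.trans_le hb_le))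
    filter_upwards [eventually_lt_of_lt_liminf
      (hb_lt.trans_le (posPartMoment_le_liminf (hu_add b) (huv_add b))), hκ] with i hi hκi
    exact (posPartMoment_add_const_mono hp.le (u i)).reflect_lt (hκi.trans_lt hi)

end Limits

theorem stmt_17_general {u₀ u₁ : α → ℝ} {κ : ℝ → ℝ} {s : Set ℝ} {J : ℝ}
    (hp : 0 < p) (hpq : ENNReal.ofReal p ≤ q) (hq_top : q ≠ ∞)
    (hu₀ : AEMeasurable u₀ μ) (hu₁ : AEMeasurable u₁ μ) (hu : MemLp (u₁ - u₀) q μ) (hJ : 0 < J)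
    (hκ : ∀ θ ∈ s, ∫ x, max ((1 - θ) * u₀ x + θ * u₁ x + κ θ) 0 ^ p ∂μ = J) :
    ContinuousOn κ s := by
  intro θ₀ hθ₀
  have hmeas (θ : ℝ) : AEMeasurable (fun x => (1 - θ) * u₀ x + θ * u₁ x) μ :=
    (hu₀.const_mul _).add (hu₁.const_mul _)
  have hmoment (θ : ℝ) (hθ : θ ∈ s) :
      posPartMoment μ p (fun x => (1 - θ) * u₀ x + θ * u₁ x + κ θ) = ENNReal.ofReal J :=
    posPartMoment_eq_ofReal_of_integral_eq hp.le hJ (hκ θ hθ)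
  have hlim (x : α) : Tendsto (fun θ => (1 - θ) * u₀ x + θ * u₁ x) (𝓝[s] θ₀)
      (𝓝 ((1 - θ₀) * u₀ x + θ₀ * u₁ x)) :=
    Continuous.continuousWithinAt (by fun_prop)
  have hnear : ∀ᶠ θ in 𝓝[s] θ₀, |θ - θ₀| ≤ 1 :=
    nhdsWithin_le_nhds (Metric.closedBall_mem_nhds θ₀ one_pos)
  refine tendsto_of_posPartMoment_add_eq hp hpq hq_top hmeas (hmeas θ₀) (.of_forall hlim) hu.norm
    (hnear.mono fun θ hθ => .of_forall fun x => ?_) (ENNReal.ofReal_pos.2 hJ).ne'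
    ENNReal.ofReal_ne_top (eventually_mem_nhdsWithin.mono hmoment) (hmoment θ₀ hθ₀)
  have hdiff : (θ - θ₀) * (u₁ x - u₀ x) ≤ |u₁ x - u₀ x| :=
    (le_abs_self _).trans <| (abs_mul _ _).trans_le <| mul_le_of_le_one_left (abs_nonneg _) hθ
  simp only [Pi.sub_apply, Real.norm_eq_abs]
  linarith

end PosPartMoment

/-- Lemma 5.6 (continuity of the compatibility constant): with `u₀, u₁ ∈ L^γ(μ)`,
`u_θ := (1-θ)u₀ + θu₁`, and `κ θ` the unique real with
`∫ (u_θ + κ θ)₊^(γ-1) dμ = J`, the map `θ ↦ κ θ` is continuous on `[0,1]`. -/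
theorem stmt_17 {Γ : Type*} [MeasurableSpace Γ] (μ : Measure Γ)
    (hμpos : 0 < μ Set.univ) (hμfin : μ Set.univ < ⊤)
    (γ : ℝ) (hγ : 1 < γ)
    (u₀ u₁ : Γ → ℝ) (hu₀_meas : Measurable u₀) (hu₁_meas : Measurable u₁)
    (hu₀_int : Integrable (fun x => |u₀ x| ^ γ) μ)
    (hu₁_int : Integrable (fun x => |u₁ x| ^ γ) μ)
    (J : ℝ) (hJ : 0 < J)
    (κ : ℝ → ℝ)
    (hκ : ∀ θ ∈ Set.Icc (0 : ℝ) 1,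
      ∫ x, (max ((1 - θ) * u₀ x + θ * u₁ x + κ θ) 0) ^ (γ - 1) ∂μ = J) :
    ContinuousOn κ (Set.Icc (0 : ℝ) 1) := by
  have hγ_pos : 0 < γ := one_pos.trans hγ
  have hu₀ := (memLp_ofReal_iff_integrable_abs_rpow hγ_pos hu₀_meas.aestronglyMeasurable).2 hu₀_int
  have hu₁ := (memLp_ofReal_iff_integrable_abs_rpow hγ_pos hu₁_meas.aestronglyMeasurable).2 hu₁_int
  exact stmt_17_general (sub_pos.2 hγ) (ENNReal.ofReal_le_ofReal (sub_le_self γ zero_le_one))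
    ENNReal.ofReal_ne_top hu₀_meas.aemeasurable hu₁_meas.aemeasurable (hu₁.sub hu₀) hJ hκ
end
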